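/- arXiv:2108.04978 — 2 statements merged into one kernel-verified Lean document; each statement's English description precedes it below -/
import Mathlib

section
/- (Theorem 1: Rényi-DP of the Measure-Marginals mechanism.) Let 𝒜 be a finite index set of attributes with each Ω_i finite and nonempty, let 𝒞 be a finite collection of subsets of 𝒜, and let (w_C)_{C∈𝒞} be real weights with Σ_{C∈𝒞} w_C² = 1. For a dataset D (a finite multiset of records in ∏_{i∈𝒜} Ω_i), let P_D be the joint distribution of the noisy weighted marginals, namely the product over C ∈ 𝒞 and cells t ∈ Ω_C of Gaussian measures on ℝ with mean w_C · (M_C(D))_t and variance σ², where σ > 0. Then for any dataset D, any record x, and any α > 1, the Rényi divergence of order α satisfies D_α(P_{D+{x}} ‖ P_D) ≤ α / (2σ²). -/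
open MeasureTheory ProbabilityTheory

/-- The Rényi divergence of order `α` between probability measures `P` and `Q`
(with `P ≪ Q`): `D_α(P‖Q) = (1/(α−1)) · log ∫ (dP/dQ)^α dQ`. -/
noncomputable def renyiDiv {X : Type*} [MeasurableSpace X] (α : ℝ) (P Q : Measure X) : ℝ :=
  (α - 1)⁻¹ * Real.log (∫ x, (P.rnDeriv Q x).toReal ^ α ∂Q)

/-- The marginal on a set of attributes `C`: the vector whose entry at
`t ∈ Ω_C = ∏_{i∈C} Ω_i` counts the records of the dataset `D` whose restriction to `C`
equals `t`. -/
noncomputable def marginal {A : Type*} [DecidableEq A] {Ω : A → Type*}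
    [∀ i, Fintype (Ω i)] [∀ i, DecidableEq (Ω i)] (C : Finset A)
    (D : Multiset ((i : A) → Ω i)) : ((i : C) → Ω i) → ℝ :=
  fun t => (D.countP (fun x => (fun i : C => x i) = t) : ℝ)

/-- The output distribution of the Measure-Marginals mechanism on dataset `D`: the product, over
sets `C ∈ 𝒞` and cells `t ∈ Ω_C`, of Gaussian measures with mean `w_C · (M_C(D))_t` and
variance `σ²`. -/
noncomputable def noisyMarginalsDist {A : Type*} [DecidableEq A] {Ω : A → Type*}
    [∀ i, Fintype (Ω i)] [∀ i, DecidableEq (Ω i)] (𝒞 : Finset (Finset A))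
    (w : Finset A → ℝ) (σ : ℝ) (D : Multiset ((i : A) → Ω i)) :
    Measure ((C : 𝒞) × ((i : (C : Finset A)) → Ω i) → ℝ) :=
  Measure.pi fun p => gaussianReal (w p.1 * marginal (p.1 : Finset A) D p.2) (σ ^ 2).toNNReal

open scoped NNReal ENNReal

/-- A shifted Gaussian as a density with respect to the unshifted one. -/
lemma gaussianReal_eq_withDensity_shift (m m' : ℝ) {v : ℝ≥0} (hv : v ≠ 0) :
    gaussianReal m' v = (gaussianReal m v).withDensity
      (fun x => ENNReal.ofReal (Real.exp ((m' - m) / v * x + (m ^ 2 - m' ^ 2) / (2 * v)))) := by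
  have hv' : (v : ℝ) ≠ 0 := by exact_mod_cast hv
  rw [gaussianReal_of_var_ne_zero _ hv, gaussianReal_of_var_ne_zero _ hv,
    ← withDensity_mul _ (measurable_gaussianPDF m v) (by fun_prop)]
  congr 1
  ext x
  simp only [Pi.mul_apply, gaussianPDF]
  rw [← ENNReal.ofReal_mul (gaussianPDFReal_nonneg _ _ _)]
  congr 1
  simp only [gaussianPDFReal]
  rw [mul_assoc _ (Real.exp _) (Real.exp _), ← Real.exp_add]
  congr 2
  field_simp
  ring

lemma integral_shift_density (m m' α : ℝ) {v : ℝ≥0} (hv : v ≠ 0) :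
    ∫ x, Real.exp (α * ((m' - m) / v * x + (m ^ 2 - m' ^ 2) / (2 * v))) ∂(gaussianReal m v) =
      Real.exp (α * (α - 1) * (m' - m) ^ 2 / (2 * v)) := by
  have hv' : (v : ℝ) ≠ 0 := by exact_mod_cast hv
  have h := congrFun (mgf_fun_id_gaussianReal (μ := m) (v := v)) (α * (m' - m) / v)
  simp only [mgf] at h
  have h2 : ∀ x : ℝ, Real.exp (α * ((m' - m) / v * x + (m ^ 2 - m' ^ 2) / (2 * v))) =
      Real.exp (α * (m' - m) / v * x) * Real.exp (α * (m ^ 2 - m' ^ 2) / (2 * v)) := by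
    intro x
    rw [← Real.exp_add]
    congr 1
    ring
  simp_rw [h2]
  rw [integral_mul_const, h, ← Real.exp_add]
  congr 1
  field_simp
  ring

lemma pi_withDensity_prod {ι : Type*} [Fintype ι] (μ : ι → Measure ℝ)
    [∀ i, IsProbabilityMeasure (μ i)] (f : ι → ℝ → ℝ≥0∞) (hf : ∀ i, Measurable (f i))
    [∀ i, SigmaFinite ((μ i).withDensity (f i))] :
    Measure.pi (fun i => (μ i).withDensity (f i)) =
      (Measure.pi μ).withDensity (fun x => ∏ i, f i (x i)) := by
  classical
  refine Measure.pi_eq fun s hs => ?_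
  have hS : MeasurableSet (Set.pi Set.univ s) := MeasurableSet.univ_pi hs
  rw [withDensity_apply _ hS, ← lintegral_indicator hS]
  have h1 : ∀ x : ι → ℝ, (Set.pi Set.univ s).indicator (fun x => ∏ i, f i (x i)) x =
      ∏ i, (s i).indicator (f i) (x i) := by
    intro x
    by_cases hx : x ∈ Set.pi Set.univ s
    · rw [Set.indicator_of_mem hx]
      exact Finset.prod_congr rfl fun i _ =>
        (Set.indicator_of_mem (hx i (Set.mem_univ i)) _).symm
    · rw [Set.indicator_of_notMem hx]
      simp only [Set.mem_pi, Set.mem_univ, true_imp_iff, not_forall] at hx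
      obtain ⟨i, hi⟩ := hx
      exact (Finset.prod_eq_zero (Finset.mem_univ i) (Set.indicator_of_notMem hi _)).symm
  simp_rw [h1]
  have hm : ∀ i, Measurable ((s i).indicator (f i)) := fun i => (hf i).indicator (hs i)
  rw [lintegral_prod_eq_prod_lintegral_of_indepFun Finset.univ
    (fun i (x : ι → ℝ) => (s i).indicator (f i) (x i))
    (iIndepFun_pi fun i => (hm i).aemeasurable) (fun i => (hm i).comp (measurable_pi_apply i))]
  refine Finset.prod_congr rfl fun i _ => ?_
  rw [(measurePreserving_eval μ i).lintegral_comp (hm i), lintegral_indicator (hs i),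
    withDensity_apply _ (hs i)]

lemma renyiDiv_pi_gaussian {ι : Type*} [Fintype ι] (m m' : ι → ℝ) {v : ℝ≥0} (hv : v ≠ 0)
    (α : ℝ) (hα : 1 < α) :
    renyiDiv α (Measure.pi fun i => gaussianReal (m' i) v)
      (Measure.pi fun i => gaussianReal (m i) v) =
      α * (∑ i, (m' i - m i) ^ 2) / (2 * v) := by
  set g : ι → ℝ → ℝ := fun i x =>
    (m' i - m i) / v * x + (m i ^ 2 - m' i ^ 2) / (2 * v) with hg
  have hgm : ∀ i, Measurable fun x => ENNReal.ofReal (Real.exp (g i x)) := by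
    intro i
    simp only [hg]
    fun_prop
  have e1 : (fun i => gaussianReal (m' i) v) =
      fun i => (gaussianReal (m i) v).withDensity fun x => ENNReal.ofReal (Real.exp (g i x)) :=
    funext fun i => gaussianReal_eq_withDensity_shift _ _ hv
  have : ∀ i, SigmaFinite ((gaussianReal (m i) v).withDensity
      fun x => ENNReal.ofReal (Real.exp (g i x))) := by
    intro i
    rw [← congrFun e1 i]
    infer_instance
  have e2 : (Measure.pi fun i => gaussianReal (m' i) v) =
      (Measure.pi fun i => gaussianReal (m i) v).withDensity
        fun x => ∏ i, ENNReal.ofReal (Real.exp (g i (x i))) := by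
    rw [e1]
    exact pi_withDensity_prod _ _ hgm
  have hM : Measurable fun x : ι → ℝ => ∏ i, ENNReal.ofReal (Real.exp (g i (x i))) :=
    Finset.measurable_fun_prod _ fun i _ => (hgm i).comp (measurable_pi_apply i)
  have e3 : ∫ x, (((Measure.pi fun i => gaussianReal (m' i) v).rnDeriv
      (Measure.pi fun i => gaussianReal (m i) v)) x).toReal ^ α
      ∂(Measure.pi fun i => gaussianReal (m i) v) =
      Real.exp (∑ i, α * (α - 1) * (m' i - m i) ^ 2 / (2 * v)) := by
    rw [Real.exp_sum]
    simp_rw [← fun i => integral_shift_density (m i) (m' i) α hv]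
    rw [← integral_fintype_prod_eq_prod
      (f := fun i x => Real.exp (α * ((m' i - m i) / v * x + (m i ^ 2 - m' i ^ 2) / (2 * v))))]
    refine integral_congr_ae ?_
    rw [e2]
    filter_upwards [Measure.rnDeriv_withDensity _ hM] with x hx
    rw [hx, ENNReal.toReal_prod, ← Real.finsetProd_rpow _ _ (fun i _ => ENNReal.toReal_nonneg)]
    refine Finset.prod_congr rfl fun i _ => ?_
    rw [ENNReal.toReal_ofReal (Real.exp_pos _).le, ← Real.exp_mul, mul_comm]
  rw [renyiDiv, e3, Real.log_exp, ← Finset.sum_div, ← Finset.mul_sum]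
  have : α - 1 ≠ 0 := by linarith
  field_simp

/-- **Theorem 1: Rényi-DP of the Measure-Marginals mechanism.**
If the weights satisfy `Σ_{C∈𝒞} w_C² = 1` and `σ > 0`, then for any dataset `D`, any record
`x` and any `α > 1`, the Rényi divergence of order `α` between the output distributions of the
mechanism on `D + {x}` and on `D` is at most `α / (2σ²)`. -/
theorem renyiDP_measure_marginals {A : Type*} [Fintype A] [DecidableEq A] {Ω : A → Type*}
    [∀ i, Fintype (Ω i)] [∀ i, Nonempty (Ω i)] [∀ i, DecidableEq (Ω i)]
    (𝒞 : Finset (Finset A)) (w : Finset A → ℝ) (hw : ∑ C ∈ 𝒞, (w C) ^ 2 = 1)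
    (σ : ℝ) (hσ : 0 < σ) (D : Multiset ((i : A) → Ω i)) (x : (i : A) → Ω i)
    (α : ℝ) (hα : 1 < α) :
    renyiDiv α (noisyMarginalsDist 𝒞 w σ (x ::ₘ D)) (noisyMarginalsDist 𝒞 w σ D) ≤
      α / (2 * σ ^ 2) := by
  have hv : (σ ^ 2).toNNReal ≠ 0 := by
    simp only [ne_eq, Real.toNNReal_eq_zero, not_le]
    positivity
  unfold noisyMarginalsDist
  rw [renyiDiv_pi_gaussian _ _ hv α hα, Real.coe_toNNReal _ (by positivity)]
  have hsum : ∑ p : (C : 𝒞) × ((i : (C : Finset A)) → Ω i),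
      (w p.1 * marginal (p.1 : Finset A) (x ::ₘ D) p.2 -
        w p.1 * marginal (p.1 : Finset A) D p.2) ^ 2 = 1 := by
    rw [Fintype.sum_sigma, ← hw, ← Finset.sum_coe_sort 𝒞]
    refine Finset.sum_congr rfl fun C _ => ?_
    have h : ∀ t : (i : (C : Finset A)) → Ω i,
        (w C * marginal (C : Finset A) (x ::ₘ D) t - w C * marginal (C : Finset A) D t) ^ 2 =
        if (fun i : (C : Finset A) => x i) = t then w C ^ 2 else 0 := by
      intro t
      simp only [marginal, Multiset.countP_cons]
      split_ifs <;> push_cast <;> ring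
    simp only [h]
    simp
  rw [hsum, mul_one]
end

section
/- (Proposition: Rényi-DP of the Exponential Mechanism.) Let R be a finite nonempty type, ε ≥ 0, Δ ≥ 0, and let q, q′ : R → ℝ satisfy |q(r) − q′(r)| ≤ Δ for all r ∈ R. Define P(r) = exp(ε · q(r)) / Σ_{s∈R} exp(ε · q(s)) and Q(r) = exp(ε · q′(r)) / Σ_{s∈R} exp(ε · q′(s)). Then for every α > 1, the Rényi divergence of order α satisfies (1/(α−1)) · log (Σ_{r∈R} P(r)^α Q(r)^{1−α}) ≤ α (2εΔ)² / 8. -/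
open MeasureTheory ProbabilityTheory in
/-- Hoeffding's lemma for a finitely supported distribution. -/
lemma finite_hoeffding {R : Type*} [Fintype R] (P X : R → ℝ) (B : ℝ)
    (hP : ∀ r, 0 ≤ P r) (h1 : ∑ r, P r = 1) (hX : ∀ r, |X r| ≤ B) :
    ∃ m : ℝ, ∀ t : ℝ, ∑ r, P r * Real.exp (t * X r) ≤ Real.exp (t * m + t ^ 2 * B ^ 2 / 2) := by
  letI : MeasurableSpace R := ⊤
  let μ : Measure R := ∑ r, ENNReal.ofReal (P r) • Measure.dirac r
  have hint : ∀ f : R → ℝ, ∫ x, f x ∂μ = ∑ r, P r * f r := by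
    intro f
    rw [integral_finset_sum_measure]
    · refine Finset.sum_congr rfl fun r _ => ?_
      rw [integral_smul_measure, integral_dirac, ENNReal.toReal_ofReal (hP r), smul_eq_mul]
    · intro r _
      exact (integrable_dirac (by simp)).smul_measure ENNReal.ofReal_ne_top
  haveI : IsProbabilityMeasure μ := ⟨by
    simp only [μ, Measure.coe_finset_sum, Finset.sum_apply, Measure.smul_apply, measure_univ,
      smul_eq_mul, mul_one]
    rw [← ENNReal.ofReal_sum_of_nonneg (fun r _ => hP r), h1, ENNReal.ofReal_one]⟩
  have hm : Measurable X := fun _ _ => trivial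
  have H := hasSubgaussianMGF_of_mem_Icc (μ := μ) (X := X) (a := -B) (b := B) hm.aemeasurable
    (Filter.Eventually.of_forall fun r => abs_le.mp (hX r))
  refine ⟨∫ x, X x ∂μ, fun t => ?_⟩
  have h2 := H.mgf_le t
  set m := ∫ x, X x ∂μ
  rw [mgf, hint] at h2
  have e : ∑ r, P r * Real.exp (t * X r)
      = Real.exp (t * m) * ∑ r, P r * Real.exp (t * (X r - m)) := by
    rw [Finset.mul_sum]
    refine Finset.sum_congr rfl fun r _ => ?_
    rw [mul_left_comm, ← Real.exp_add]
    congr 2; ring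
  rw [e, Real.exp_add]
  refine mul_le_mul_of_nonneg_left (h2.trans (Real.exp_le_exp.mpr (le_of_eq ?_))) (Real.exp_pos _).le
  have : (B - -B) / 2 = B := by ring
  simp only [NNReal.coe_pow, NNReal.coe_div, coe_nnnorm, NNReal.coe_ofNat, Real.norm_eq_abs]
  rw [div_pow, sq_abs]
  ring

/-- **Proposition: Rényi-DP of the Exponential Mechanism.**
For a finite nonempty type `R`, `ε ≥ 0`, `Δ ≥ 0`, and quality scores `q, q'` with
`|q(r) − q'(r)| ≤ Δ` for all `r`, the exponential-mechanism output distributions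
`P(r) = exp(ε q(r)) / Σ_s exp(ε q(s))` and `Q(r) = exp(ε q'(r)) / Σ_s exp(ε q'(s))` satisfy,
for every `α > 1`, `(1/(α−1)) · log (Σ_r P(r)^α Q(r)^(1−α)) ≤ α (2εΔ)² / 8`. -/
theorem exponential_mechanism_rdp {R : Type*} [Fintype R] [Nonempty R]
    (ε Δ : ℝ) (hε : 0 ≤ ε) (hΔ : 0 ≤ Δ) (q q' : R → ℝ)
    (hsens : ∀ r, |q r - q' r| ≤ Δ)
    (P Q : R → ℝ)
    (hP : ∀ r, P r = Real.exp (ε * q r) / ∑ s, Real.exp (ε * q s))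
    (hQ : ∀ r, Q r = Real.exp (ε * q' r) / ∑ s, Real.exp (ε * q' s))
    (α : ℝ) (hα : 1 < α) :
    (α - 1)⁻¹ * Real.log (∑ r, P r ^ α * Q r ^ (1 - α)) ≤ α * (2 * ε * Δ) ^ 2 / 8 := by
  have hZ : 0 < ∑ s, Real.exp (ε * q s) :=
    Finset.sum_pos (fun _ _ => Real.exp_pos _) Finset.univ_nonempty
  have hZ' : 0 < ∑ s, Real.exp (ε * q' s) :=
    Finset.sum_pos (fun _ _ => Real.exp_pos _) Finset.univ_nonempty
  set Z := ∑ s, Real.exp (ε * q s) with hZd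
  set Z' := ∑ s, Real.exp (ε * q' s) with hZd'
  have hPpos : ∀ r, 0 < P r := fun r => by rw [hP]; exact div_pos (Real.exp_pos _) hZ
  have hQpos : ∀ r, 0 < Q r := fun r => by rw [hQ]; exact div_pos (Real.exp_pos _) hZ'
  have h1 : ∑ r, P r = 1 := by
    simp only [hP]
    rw [← Finset.sum_div, ← hZd, div_self hZ.ne']
  obtain ⟨m, hm⟩ := finite_hoeffding P (fun r => ε * (q r - q' r)) (ε * Δ)
    (fun r => (hPpos r).le) h1 (fun r => by
      rw [abs_mul, abs_of_nonneg hε]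
      exact mul_le_mul_of_nonneg_left (hsens r) hε)
  have hratio : ∑ r, P r * Real.exp (-1 * (ε * (q r - q' r))) = Z' / Z := by
    rw [hZd', Finset.sum_div]
    refine Finset.sum_congr rfl fun r _ => ?_
    rw [hP, div_mul_eq_mul_div, ← Real.exp_add]
    congr 2; ring
  have ha := hm (α - 1)
  have hb := hm (-1)
  rw [hratio] at hb
  have hZZ : 0 < Z' / Z := div_pos hZ' hZ
  have hsum : ∑ r, P r ^ α * Q r ^ (1 - α)
      = (Z' / Z) ^ (α - 1) * ∑ r, P r * Real.exp ((α - 1) * (ε * (q r - q' r))) := by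
    rw [Finset.mul_sum]
    refine Finset.sum_congr rfl fun r _ => ?_
    have e1 : P r = Q r * (Z' / Z) * Real.exp (ε * (q r - q' r)) := by
      rw [hP, hQ, mul_sub, Real.exp_sub]
      field_simp
    have e2 : P r ^ α = P r * P r ^ (α - 1) := by
      rw [Real.rpow_sub_one (hPpos r).ne']
      field_simp [(hPpos r).ne']
    have e3 : P r ^ (α - 1)
        = Q r ^ (α - 1) * (Z' / Z) ^ (α - 1) * Real.exp ((α - 1) * (ε * (q r - q' r))) := by
      conv_lhs => rw [e1]
      rw [Real.mul_rpow (mul_pos (hQpos r) hZZ).le (Real.exp_pos _).le,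
        Real.mul_rpow (hQpos r).le hZZ.le, ← Real.exp_mul, mul_comm (α - 1) (ε * _)]
    have e4 : Q r ^ (α - 1) * Q r ^ (1 - α) = 1 := by
      rw [← Real.rpow_add (hQpos r)]
      simp
    rw [e2, e3]
    linear_combination (P r * (Z' / Z) ^ (α - 1) * Real.exp ((α - 1) * (ε * (q r - q' r)))) * e4
  have hα' : 0 < α - 1 := by linarith
  have hS : 0 < ∑ r, P r * Real.exp ((α - 1) * (ε * (q r - q' r))) :=
    Finset.sum_pos (fun r _ => mul_pos (hPpos r) (Real.exp_pos _)) Finset.univ_nonempty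
  rw [hsum, Real.log_mul (Real.rpow_pos_of_pos hZZ _).ne' hS.ne', Real.log_rpow hZZ,
    inv_mul_le_iff₀ hα']
  have la := (Real.log_le_iff_le_exp hS).mpr ha
  have lb := mul_le_mul_of_nonneg_left ((Real.log_le_iff_le_exp hZZ).mpr hb) hα'.le
  refine (add_le_add lb la).trans (le_of_eq ?_)
  ring
end
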